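/- Let n > 4, let L = H(n) over ℂ with its ℤ-grading L = ⊕_{j=−1}^{n−3} L_j, and let f ∈ BDer(L)_i be a super-biderivation of ℤ-degree i. If i ≠ 0, then f is the zero map. -/

import Mathlib

open scoped BigOperators

noncomputable section

namespace CartanSuper

/-- Coordinates of the exterior algebra `Λ(n)` with respect to the monomial basis
`{x_S : S ⊆ {1,…,n}}`. -/
abbrev Lambda (n : ℕ) := Finset (Fin n) → ℂ

/-- Endomorphism algebra of `Λ(n)`. -/
abbrev E (n : ℕ) := Module.End ℂ (Lambda n)

variable (n : ℕ)

/-- `(−1)^k`. -/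
def msign (k : ℕ) : ℂ := (-1 : ℂ) ^ k

/-- The basis monomial `x_S = x_{i₁}⋯x_{i_k}` (indices in increasing order). -/
def mono (S : Finset (Fin n)) : Lambda n := fun T => if T = S then 1 else 0

/-- Number of inversions between `S` and `T`. -/
def inversions (S T : Finset (Fin n)) : ℕ := ((S ×ˢ T).filter fun p => p.2 < p.1).card

/-- The multiplication of `Λ(n)` in coordinates:
`x_S · x_T = (−1)^{inversions} x_{S ∪ T}` for disjoint `S, T` and `0` otherwise. -/
def lmulFun (f g : Lambda n) : Lambda n :=
  fun U => ∑ S ∈ U.powerset, msign (inversions n S (U \ S)) * f S * g (U \ S)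

/-- Left multiplication by an element of `Λ(n)`, as a linear map `Λ(n) →ₗ End Λ(n)`. -/
def mulOp : Lambda n →ₗ[ℂ] E n where
  toFun f :=
    { toFun := lmulFun n f
      map_add' := by
        intro g h; funext U
        simp [lmulFun, mul_add, Finset.sum_add_distrib]
      map_smul' := by
        intro c g; funext U
        simp only [lmulFun, Pi.smul_apply, smul_eq_mul, RingHom.id_apply, Finset.mul_sum]
        exact Finset.sum_congr rfl (by intros; ring) }
  map_add' := by
    intro f g; apply LinearMap.ext; intro h; funext U
    show lmulFun n (f + g) h U = lmulFun n f h U + lmulFun n g h U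
    simp only [lmulFun]
    rw [← Finset.sum_add_distrib]
    exact Finset.sum_congr rfl (by intros; simp [Pi.add_apply]; ring)
  map_smul' := by
    intro c f; apply LinearMap.ext; intro h; funext U
    show lmulFun n (c • f) h U = (c • lmulFun n f h) U
    simp only [lmulFun, Pi.smul_apply, smul_eq_mul, Finset.mul_sum]
    exact Finset.sum_congr rfl (by intros; ring)

/-- The superderivation `∂_i` of `Λ(n)`, in coordinates. -/
def pd (i : Fin n) : E n where
  toFun f := fun S =>
    if i ∈ S then 0 else msign (S.filter (· < i)).card * f (insert i S)
  map_add' := by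
    intro f g; funext S; by_cases h : i ∈ S <;> simp [h, mul_add]
  map_smul' := by
    intro c f; funext S; by_cases h : i ∈ S <;> simp [h] <;> ring

/-- The parity operator `σ` of `Λ(n)`: `σ(x_S) = (−1)^{|S|} x_S`. -/
def par : E n where
  toFun f := fun S => msign S.card * f S
  map_add' := by intro f g; funext S; simp [mul_add]
  map_smul' := by intro c f; funext S; simp; ring

/-- The super-commutator `[D,F] = D∘F − (−1)^{|D||F|} F∘D`, extended bilinearly to all of
`End Λ(n)` using the parity operator `σ`
(for homogeneous `D`, `σ∘D∘σ = (−1)^{|D|} D`). -/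
def sbFun (D F : E n) : E n :=
  D * F - (2:ℂ)⁻¹ • ((F + par n * F * par n) * D + (F - par n * F * par n) * (par n * D * par n))

/-- The super-commutator as a bilinear map. -/
def sbL : E n →ₗ[ℂ] E n →ₗ[ℂ] E n :=
  LinearMap.mk₂ ℂ (sbFun n)
    (fun D D' F => by
      simp only [sbFun, add_mul, sub_mul, mul_add, mul_sub, smul_mul_assoc, mul_smul_comm,
        smul_add, smul_sub]
      module)
    (fun c D F => by
      simp only [sbFun, add_mul, sub_mul, mul_add, mul_sub, smul_mul_assoc, mul_smul_comm,
        smul_add, smul_sub]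
      module)
    (fun D F F' => by
      simp only [sbFun, add_mul, sub_mul, mul_add, mul_sub, smul_mul_assoc, mul_smul_comm,
        smul_add, smul_sub]
      module)
    (fun c D F => by
      simp only [sbFun, add_mul, sub_mul, mul_add, mul_sub, smul_mul_assoc, mul_smul_comm,
        smul_add, smul_sub]
      module)

/-- Shorthand for the super-commutator. -/
def sb (D F : E n) : E n := sbL n D F

/-- The ℤ₂-homogeneous component of `Λ(n)` of parity `p`. -/
def lpar (p : ZMod 2) : Submodule ℂ (Lambda n) where
  carrier := {f | ∀ S : Finset (Fin n), (S.card : ZMod 2) ≠ p → f S = 0}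
  add_mem' := by intro f g hf hg S hS; simp [Pi.add_apply, hf S hS, hg S hS]
  zero_mem' := by intro S hS; rfl
  smul_mem' := by intro c f hf S hS; simp [Pi.smul_apply, hf S hS]

/-- The ℤ-homogeneous component of `Λ(n)` of degree `m` (zero unless `0 ≤ m ≤ n`). -/
def ldeg (m : ℤ) : Submodule ℂ (Lambda n) where
  carrier := {f | ∀ S : Finset (Fin n), (S.card : ℤ) ≠ m → f S = 0}
  add_mem' := by intro f g hf hg S hS; simp [Pi.add_apply, hf S hS, hg S hS]
  zero_mem' := by intro S hS; rfl
  smul_mem' := by intro c f hf S hS; simp [Pi.smul_apply, hf S hS]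

/-- Endomorphisms of `Λ(n)` that are ℤ₂-homogeneous of parity `p`. -/
def epar (p : ZMod 2) : Submodule ℂ (E n) where
  carrier := {D | ∀ (q : ZMod 2), ∀ f ∈ lpar n q, D f ∈ lpar n (q + p)}
  add_mem' := by
    intro D F hD hF q f hf
    simpa [LinearMap.add_apply] using (lpar n (q + p)).add_mem (hD q f hf) (hF q f hf)
  zero_mem' := by intro q f hf; simpa using (lpar n (q + p)).zero_mem
  smul_mem' := by
    intro c D hD q f hf
    simpa [LinearMap.smul_apply] using (lpar n (q + p)).smul_mem c (hD q f hf)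

/-- Endomorphisms of `Λ(n)` that are ℤ-homogeneous of degree `d`. -/
def edeg (d : ℤ) : Submodule ℂ (E n) where
  carrier := {D | ∀ (m : ℤ), ∀ f ∈ ldeg n m, D f ∈ ldeg n (m + d)}
  add_mem' := by
    intro D F hD hF m f hf
    simpa [LinearMap.add_apply] using (ldeg n (m + d)).add_mem (hD m f hf) (hF m f hf)
  zero_mem' := by intro m f hf; simpa using (ldeg n (m + d)).zero_mem
  smul_mem' := by
    intro c D hD m f hf
    simpa [LinearMap.smul_apply] using (ldeg n (m + d)).smul_mem c (hD m f hf)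

/-- The linear map `(f₁,…,f_n) ↦ ∑ᵢ fᵢ ∂ᵢ`. -/
def Wmap : (Fin n → Lambda n) →ₗ[ℂ] E n where
  toFun F := ∑ i, mulOp n (F i) * pd n i
  map_add' := by
    intro F G
    simp only [Pi.add_apply, map_add, add_mul, Finset.sum_add_distrib]
  map_smul' := by
    intro c F
    simp only [RingHom.id_apply, Pi.smul_apply, map_smul, smul_mul_assoc, Finset.smul_sum]

/-- The divergence `(f₁,…,f_n) ↦ ∑ᵢ ∂ᵢ(fᵢ)`. -/
def divMap : (Fin n → Lambda n) →ₗ[ℂ] Lambda n where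
  toFun F := ∑ i, pd n i (F i)
  map_add' := by
    intro F G
    simp only [Pi.add_apply, map_add, Finset.sum_add_distrib]
  map_smul' := by
    intro c F
    simp only [RingHom.id_apply, Pi.smul_apply, map_smul, Finset.smul_sum]

/-- The Witt type Lie superalgebra `W(n) = {∑ fᵢ∂ᵢ : fᵢ ∈ Λ(n)}`. -/
def Wn : Submodule ℂ (E n) := LinearMap.range (Wmap n)

/-- Divergence-free coefficient tuples. -/
def divFree : Submodule ℂ (Fin n → Lambda n) := LinearMap.ker (divMap n)

/-- The special type Lie superalgebra `S(n) = {∑ fᵢ∂ᵢ : ∑ ∂ᵢ(fᵢ) = 0}`. -/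
def Sn : Submodule ℂ (E n) := (divFree n).map (Wmap n)

/-- The top monomial `ω = x₁x₂⋯x_n`. -/
def omegaTop : Lambda n := mono n Finset.univ

/-- `1 − x₁x₂⋯x_n`. -/
def oneM : Lambda n := mono n ∅ - omegaTop n

/-- Multiplication of every coefficient by `1 − x₁⋯x_n`. -/
def oneMScale : (Fin n → Lambda n) →ₗ[ℂ] (Fin n → Lambda n) :=
  LinearMap.pi fun i => (mulOp n (oneM n)) ∘ₗ LinearMap.proj i

/-- The Lie superalgebra `S̃(n) = {(1−x₁⋯x_n)∑ fᵢ∂ᵢ : ∑ ∂ᵢ(fᵢ) = 0}` (`n` even). -/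
def Stn : Submodule ℂ (E n) := (divFree n).map (Wmap n ∘ₗ oneMScale n)

/-- The conjugate index `i'`. -/
def cidx (i : Fin n) : Fin n :=
  ⟨if i.val < n / 2 then i.val + n / 2 else if i.val < 2 * (n / 2) then i.val - n / 2 else i.val,
   by have := i.isLt; split_ifs <;> omega⟩

/-- The linear map `f ↦ D_H(f) = (−1)^{|f|} ∑ᵢ ∂ᵢ(f)∂_{i'}` (the sign is implemented by the
parity operator `σ`, so that this is a single linear map agreeing with `D_H` on homogeneous
elements). -/
def DHmap : Lambda n →ₗ[ℂ] E n where
  toFun f := ∑ i, mulOp n (pd n i (par n f)) * pd n (cidx n i)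
  map_add' := by
    intro f g
    simp only [map_add, add_mul, Finset.sum_add_distrib]
  map_smul' := by
    intro c f
    simp only [RingHom.id_apply, map_smul, smul_mul_assoc, Finset.smul_sum]

/-- Evaluation of the top coefficient. -/
def evalTop : Lambda n →ₗ[ℂ] ℂ := LinearMap.proj Finset.univ

/-- The Hamiltonian Lie superalgebra `H(n) = {D_H(f) : f ∈ ⊕_{i=0}^{n−1} Λ(n)_i}`. -/
def Hn : Submodule ℂ (E n) := (LinearMap.ker (evalTop n)).map (DHmap n)

/-- `H̃(n) = {D_H(f) : f ∈ Λ(n)}`. -/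
def HtN : Submodule ℂ (E n) := LinearMap.range (DHmap n)

/-- The degree derivation `𝒞 = ∑ᵢ xᵢ∂ᵢ`. -/
def CC : E n := ∑ i, mulOp n (mono n {i}) * pd n i

/-- The span of the diagonal elements `xᵢ∂ᵢ`. -/
def diagSpan : Submodule ℂ (E n) :=
  Submodule.span ℂ (Set.range fun i : Fin n => mulOp n (mono n {i}) * pd n i)

/-- The four families of Cartan type Lie superalgebras. -/
inductive CT | W | S | St | H
deriving DecidableEq

/-- Validity of the parameter `n` for each family. -/
def CT.valid : CT → ℕ → Prop
  | .W, n => 4 ≤ n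
  | .S, n => 4 ≤ n
  | .St, n => 4 ≤ n ∧ Even n
  | .H, n => 4 < n

/-- The Cartan type Lie superalgebra `L` itself. -/
def CT.algebra : CT → (n : ℕ) → Submodule ℂ (E n)
  | .W, n => Wn n
  | .S, n => Sn n
  | .St, n => Stn n
  | .H, n => Hn n

/-- The extended algebra `L'`: `L' = L` for `W(n)` and `S̃(n)`, `L' = S(n) ⊕ ℂ𝒞` for `S(n)`,
and `L' = H̃(n) ⊕ ℂ𝒞` for `H(n)`. -/
def CT.prime : CT → (n : ℕ) → Submodule ℂ (E n)
  | .W, n => Wn n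
  | .S, n => Sn n ⊔ Submodule.span ℂ {CC n}
  | .St, n => Stn n
  | .H, n => HtN n ⊔ Submodule.span ℂ {CC n}

/-- The top degree `ξ_L` of the ℤ-grading. -/
def CT.xi : CT → (n : ℕ) → ℤ
  | .W, n => (n : ℤ) - 1
  | .S, n => (n : ℤ) - 2
  | .St, n => (n : ℤ) - 2
  | .H, n => (n : ℤ) - 3

/-- The ℤ-grading component `L_j = L ∩ W(n)_j`; for `S̃(n)` the component of degree `−1`
is `span{(1−x₁⋯x_n)∂ᵢ}` instead. -/
def CT.grade (t : CT) (n : ℕ) (j : ℤ) : Submodule ℂ (E n) :=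
  match t with
  | .St =>
      if j = -1 then
        Submodule.span ℂ (Set.range fun i : Fin n => mulOp n (oneM n) * pd n i)
      else Stn n ⊓ edeg n j
  | t => t.algebra n ⊓ edeg n j

/-- The ℤ-grading component `L'_j` of the extended algebra `L'`. -/
def CT.grade' (t : CT) (n : ℕ) (j : ℤ) : Submodule ℂ (E n) :=
  match t with
  | .St => CT.grade .St n j
  | t => t.prime n ⊓ edeg n j

/-- The standard Cartan subalgebra `H_L` of `L`: the part of the diagonal
`span{xᵢ∂ᵢ}` lying in `L`. -/
def CT.cartan (t : CT) (n : ℕ) : Submodule ℂ (E n) := t.algebra n ⊓ diagSpan n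

/-- The weight space of `M ⊆ End Λ(n)` of weight `μ ∈ H_L^*` under the adjoint action
of the standard Cartan subalgebra of `L`. -/
def wtsp (t : CT) (n : ℕ) (M : Submodule ℂ (E n)) (μ : Module.Dual ℂ (t.cartan n)) :
    Submodule ℂ (E n) where
  carrier := {x | x ∈ M ∧ ∀ h : t.cartan n, sbL n h x = μ h • x}
  add_mem' := by
    rintro x y ⟨hx, hx'⟩ ⟨hy, hy'⟩
    exact ⟨M.add_mem hx hy, fun h => by simp [map_add, hx' h, hy' h, smul_add]⟩
  zero_mem' := ⟨M.zero_mem, fun h => by simp⟩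
  smul_mem' := by
    rintro c x ⟨hx, hx'⟩
    exact ⟨M.smul_mem c hx, fun h => by simp [map_smul, hx' h, smul_comm c]⟩

/-- The set of roots of `M` with respect to the standard Cartan subalgebra of `L`:
the nonzero weights with nonzero weight space. -/
def CT.roots (t : CT) (n : ℕ) (M : Submodule ℂ (E n)) : Set (Module.Dual ℂ (t.cartan n)) :=
  {ε | ε ≠ 0 ∧ wtsp t n M ε ≠ ⊥}

/-- The sign `(−1)^p` for `p ∈ ℤ₂`. -/
def sgn (p : ZMod 2) : ℂ := (-1 : ℂ) ^ p.val

/-- `f` is a super-biderivation of `L` of ℤ₂-degree `pf`: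
a bilinear map with `f(L_α, L_β) ⊆ L_{α+β+pf}` satisfying
`f([x,y],z) = (−1)^{|x||f|}[x,f(y,z)] + (−1)^{|y||z|}[f(x,z),y]` and
`f(x,[y,z]) = [f(x,y),z] + (−1)^{(|f|+|x|)|y|}[y,f(x,z)]` for homogeneous `x,y,z ∈ L`.
(The bilinear map is given as a bilinear map on the ambient space `End Λ(n)`;
only its restriction to `L` is relevant.) -/
structure IsSuperBider (L : Submodule ℂ (E n)) (pf : ZMod 2)
    (f : E n →ₗ[ℂ] E n →ₗ[ℂ] E n) : Prop where
  maps : ∀ (α β : ZMod 2), ∀ x ∈ L ⊓ epar n α, ∀ y ∈ L ⊓ epar n β,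
    f x y ∈ L ⊓ epar n (α + β + pf)
  eq1 : ∀ (α β γ : ZMod 2), ∀ x ∈ L ⊓ epar n α, ∀ y ∈ L ⊓ epar n β, ∀ z ∈ L ⊓ epar n γ,
    f (sbL n x y) z = sgn (α * pf) • sbL n x (f y z) + sgn (β * γ) • sbL n (f x z) y
  eq2 : ∀ (α β γ : ZMod 2), ∀ x ∈ L ⊓ epar n α, ∀ y ∈ L ⊓ epar n β, ∀ z ∈ L ⊓ epar n γ,
    f x (sbL n y z) = sbL n (f x y) z + sgn ((pf + α) * β) • sbL n y (f x z)

/-- `D` is a superderivation of `L` of ℤ₂-degree `p`: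
`D(L_α) ⊆ L_{α+p}` and `D([x,y]) = [D(x),y] + (−1)^{|D||x|}[x,D(y)]` for homogeneous
`x, y ∈ L`. (Given as a linear map on the ambient space `End Λ(n)`.) -/
structure IsSuperDer (L : Submodule ℂ (E n)) (p : ZMod 2)
    (D : E n →ₗ[ℂ] E n) : Prop where
  maps : ∀ (α : ZMod 2), ∀ x ∈ L ⊓ epar n α, D x ∈ L ⊓ epar n (α + p)
  leib : ∀ (α β : ZMod 2), ∀ x ∈ L ⊓ epar n α, ∀ y ∈ L ⊓ epar n β,
    D (sbL n x y) = sbL n (D x) y + sgn (p * α) • sbL n x (D y)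

/-- `f ∈ BDer(L)_ε`: the super-biderivation `f` has weight `ε ∈ H_L^*`, i.e.
`f(L_η, L_ζ) ⊆ L_{ε+η+ζ}` for all weights `η, ζ`. -/
def CT.HasWeight (t : CT) (n : ℕ) (f : E n →ₗ[ℂ] E n →ₗ[ℂ] E n)
    (ε : Module.Dual ℂ (t.cartan n)) : Prop :=
  ∀ (η ζ : Module.Dual ℂ (t.cartan n)),
    ∀ x ∈ wtsp t n (t.algebra n) η, ∀ y ∈ wtsp t n (t.algebra n) ζ,
      f x y ∈ wtsp t n (t.algebra n) (ε + η + ζ)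

/-- `f ∈ BDer(L)_i`: the super-biderivation `f` has ℤ-degree `i`, i.e.
`f(L_j, L_k) ⊆ L_{i+j+k}` for all `j, k ∈ ℤ`. -/
def CT.HasDeg (t : CT) (n : ℕ) (f : E n →ₗ[ℂ] E n →ₗ[ℂ] E n) (i : ℤ) : Prop :=
  ∀ (j k : ℤ), ∀ x ∈ t.grade n j, ∀ y ∈ t.grade n k, f x y ∈ t.grade n (i + j + k)

section AuxP1
variable {n : ℕ}

lemma msign_add (a b : ℕ) : msign (a + b) = msign a * msign b := pow_add _ _ _
lemma msign_sq (a : ℕ) : msign a * msign a = 1 := by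
  rw [← msign_add, ← two_mul]; simp [msign]
lemma msign_succ (a : ℕ) : msign (a + 1) = - msign a := by simp [msign, pow_succ]
lemma msign_ne (a : ℕ) : msign a ≠ 0 := by simp [msign]
lemma msign_zero : msign 0 = 1 := by simp [msign]
lemma msign_congr {a b : ℕ} (h : a % 2 = b % 2) : msign a = msign b := by
  unfold msign
  rw [neg_one_pow_eq_pow_mod_two, h, ← neg_one_pow_eq_pow_mod_two]
lemma msign_neg {a b : ℕ} (h : a % 2 = (b + 1) % 2) : msign a = - msign b := by
  rw [← msign_succ]; exact msign_congr h

lemma mono_self (S : Finset (Fin n)) : mono n S S = 1 := by simp [mono]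
lemma mono_ne {S T : Finset (Fin n)} (h : T ≠ S) : mono n S T = 0 := by simp [mono, h]

lemma sum_mono (f : Lambda n) : f = ∑ S, f S • mono n S := by
  funext T
  simp [Finset.sum_apply, mono]

/-- Linear maps agreeing on monomials agree. -/
lemma ext_mono {M : Type*} [AddCommGroup M] [Module ℂ M] {A B : Lambda n →ₗ[ℂ] M}
    (h : ∀ S, A (mono n S) = B (mono n S)) : A = B := by
  apply LinearMap.ext; intro f
  rw [sum_mono f]; simp [h]

/-- product -/
abbrev mu (f g : Lambda n) : Lambda n := mulOp n f g

lemma mu_apply (f g : Lambda n) (U : Finset (Fin n)) :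
    mu f g U = ∑ S ∈ U.powerset, msign (inversions n S (U \ S)) * f S * g (U \ S) := rfl

lemma mu_mono (S T : Finset (Fin n)) : mu (mono n S) (mono n T) =
    if Disjoint S T then msign (inversions n S T) • mono n (S ∪ T) else 0 := by
  funext U
  rw [mu_apply]
  split_ifs with h
  · by_cases hU : U = S ∪ T
    · subst hU
      have hd : (S ∪ T) \ S = T := by
        rw [Finset.union_sdiff_left]; exact Finset.sdiff_eq_self_of_disjoint h.symm
      rw [Finset.sum_eq_single S]
      · rw [hd]; simp [mono_self]
      · intro R _ hR; simp [mono_ne hR]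
      · intro hS; exact absurd (Finset.mem_powerset.2 Finset.subset_union_left) hS
    · simp only [Pi.smul_apply, mono_ne hU, smul_zero]
      apply Finset.sum_eq_zero
      intro R hR
      by_cases hRS : R = S
      · subst hRS
        have : U \ R ≠ T := by
          intro hh; apply hU; rw [← hh, Finset.union_sdiff_of_subset (Finset.mem_powerset.1 hR)]
        simp [mono_ne this]
      · simp [mono_ne hRS]
  · simp only [Pi.zero_apply]
    apply Finset.sum_eq_zero
    intro R hR
    by_cases hRS : R = S
    · subst hRS
      have : U \ R ≠ T := by
        intro hh; apply h; rw [← hh]; exact Finset.disjoint_sdiff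
      simp [mono_ne this]
    · simp [mono_ne hRS]

lemma pd_mono (i : Fin n) (S : Finset (Fin n)) : pd n i (mono n S) =
    if i ∈ S then msign (S.filter (· < i)).card • mono n (S.erase i) else 0 := by
  funext T
  show (if i ∈ T then 0 else msign (T.filter (· < i)).card * mono n S (insert i T)) = _
  by_cases hS : i ∈ S
  · simp only [hS, if_true, Pi.smul_apply, smul_eq_mul]
    by_cases hT : T = S.erase i
    · subst hT
      have : (S.erase i).filter (· < i) = S.filter (· < i) := by
        ext x; simp; intro h1 h2 h3; subst h3; simp at h1
      simp [Finset.insert_erase hS, this, mono_self]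
    · rw [mono_ne hT]
      by_cases hiT : i ∈ T
      · simp [hiT]
      · have : insert i T ≠ S := by
          intro hh; apply hT; rw [← hh, Finset.erase_insert hiT]
        simp [hiT, mono_ne this]
  · have : insert i T ≠ S := by
      intro hh; apply hS; rw [← hh]; simp
    simp [hS, mono_ne this]

lemma par_mono (S : Finset (Fin n)) : par n (mono n S) = msign S.card • mono n S := by
  funext T
  show msign T.card * mono n S T = msign S.card * mono n S T
  by_cases h : T = S
  · rw [h]
  · simp [mono_ne h]

lemma par_par (f : Lambda n) : par n (par n f) = f := by
  funext T
  show msign T.card * (msign T.card * f T) = f T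
  rw [← mul_assoc, msign_sq, one_mul]

lemma pd_par (i : Fin n) (f : Lambda n) : pd n i (par n f) = - par n (pd n i f) := by
  funext T
  show (if i ∈ T then 0 else msign (T.filter (· < i)).card * (msign (insert i T).card * f (insert i T)))
    = - (msign T.card * (if i ∈ T then 0 else msign (T.filter (· < i)).card * f (insert i T)))
  by_cases h : i ∈ T
  · simp [h]
  · simp [h, Finset.card_insert_of_notMem h, msign_succ]; ring

lemma pd_pd (i j : Fin n) (f : Lambda n) : pd n i (pd n j f) = - pd n j (pd n i f) := by
  funext T
  show (if i ∈ T then 0 else msign (T.filter (· < i)).card * (if j ∈ insert i T then 0 else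
      msign ((insert i T).filter (· < j)).card * f (insert j (insert i T))))
    = - (if j ∈ T then 0 else msign (T.filter (· < j)).card * (if i ∈ insert j T then 0 else
      msign ((insert j T).filter (· < i)).card * f (insert i (insert j T))))
  by_cases hi : i ∈ T
  · simp [hi]
  by_cases hj : j ∈ T
  · simp [hj]
  by_cases hij : i = j
  · subst hij; simp
  have hji : ¬ j = i := fun h => hij h.symm
  simp only [hi, hj, Finset.mem_insert, hij, hji, or_self, if_false]
  rw [Finset.insert_comm j i, Finset.filter_insert, Finset.filter_insert]
  rcases lt_or_gt_of_ne hij with h | h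
  · have h' : ¬ j < i := not_lt.2 h.le
    simp only [h, h', if_true, if_false]
    rw [Finset.card_insert_of_notMem (by simp [hi]), msign_succ]; ring
  · have h' : ¬ i < j := not_lt.2 h.le
    simp only [h, h', if_true, if_false]
    rw [Finset.card_insert_of_notMem (by simp [hj]), msign_succ]; ring

lemma inv_eq (S T : Finset (Fin n)) :
    inversions n S T = ∑ s ∈ S, ∑ t ∈ T, if t < s then 1 else 0 := by
  unfold inversions
  rw [Finset.card_filter, Finset.sum_product]

lemma inv_erase_left {S T : Finset (Fin n)} {i : Fin n} (h : i ∈ S) :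
    inversions n S T = inversions n (S.erase i) T + (T.filter (· < i)).card := by
  rw [inv_eq, inv_eq, ← Finset.sum_erase_add _ _ h, Finset.card_filter]

lemma inv_erase_right {S T : Finset (Fin n)} {i : Fin n} (h : i ∈ T) :
    inversions n S T = inversions n S (T.erase i) + (S.filter (i < ·)).card := by
  rw [inv_eq, inv_eq, Finset.sum_comm, ← Finset.sum_erase_add _ _ h, Finset.card_filter,
    Finset.sum_comm]

lemma card_split (S : Finset (Fin n)) (i : Fin n) :
    S.card = (S.filter (· < i)).card + (S.filter (i < ·)).card + (if i ∈ S then 1 else 0) := by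
  have h1 := Finset.card_filter_add_card_filter_not (s := S) (fun x => x < i)
  have h2 := Finset.card_filter_add_card_filter_not (s := S.filter (fun x => ¬ x < i)) (fun x => i < x)
  rw [Finset.filter_filter, Finset.filter_filter] at h2
  have h3 : S.filter (fun a => ¬ a < i ∧ i < a) = S.filter (i < ·) := by
    ext x; simp; intro _ h; exact h.le
  have h4 : S.filter (fun a => ¬ a < i ∧ ¬ i < a) = if i ∈ S then {i} else ∅ := by
    ext x
    split_ifs with hi
    · simp
      constructor
      · rintro ⟨_, h5, h6⟩; exact le_antisymm h6 h5
      · rintro rfl; exact ⟨hi, le_rfl, le_rfl⟩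
    · simp; intro hx h5
      rcases eq_or_lt_of_le h5 with h6 | h6
      · exact absurd (h6 ▸ hx) hi
      · exact h6
  rw [h3, h4] at h2
  by_cases hi : i ∈ S
  · simp only [hi, if_true, Finset.card_singleton] at h2 ⊢; omega
  · simp only [hi, if_false, Finset.card_empty] at h2 ⊢; omega

lemma filter_union_card {S T : Finset (Fin n)} (h : Disjoint S T) (i : Fin n) :
    ((S ∪ T).filter (· < i)).card = (S.filter (· < i)).card + (T.filter (· < i)).card := by
  rw [Finset.filter_union, Finset.card_union_of_disjoint]
  exact Finset.disjoint_filter_filter h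

lemma leibniz_mono (i : Fin n) (S T : Finset (Fin n)) :
    pd n i (mu (mono n S) (mono n T)) = mu (pd n i (mono n S)) (mono n T)
      + mu (par n (mono n S)) (pd n i (mono n T)) := by
  have cs := card_split S i
  rw [mu_mono, par_mono, pd_mono, pd_mono]
  by_cases hS : i ∈ S
  · by_cases hT : i ∈ T
    · have hnd : ¬ Disjoint S T := fun h => Finset.disjoint_left.1 h hS hT
      simp only [hS, hT, hnd, if_true, if_false, map_zero, mu, map_smul, LinearMap.smul_apply]
      change 0 = msign _ • mu _ _ + msign _ • msign _ • mu _ _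
      rw [mu_mono, mu_mono]
      have hiff : Disjoint (S.erase i) T ↔ Disjoint S (T.erase i) := by
        simp only [Finset.disjoint_left, Finset.mem_erase]
        constructor <;> intro H a <;> have := @H a <;> tauto
      by_cases hd : Disjoint S (T.erase i)
      · have hd' := hiff.2 hd
        simp only [hd, hd', if_true]
        have hu : S.erase i ∪ T = S ∪ T.erase i := by
          ext x; simp only [Finset.mem_union, Finset.mem_erase]
          by_cases hx : x = i
          · subst hx; simp [hS, hT]
          · simp [hx]
        rw [hu, smul_smul, smul_smul, smul_smul, ← add_smul, ← msign_add, ← msign_add, ← msign_add]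
        have e1 := inv_erase_left (T := T.erase i) hS
        have e2 := inv_erase_right (S := S.erase i) hT
        have e3 : ((T.erase i).filter (· < i)) = (T.filter (· < i)) := by
          ext x; simp; intro h1 h2 h3; subst h3; simp at h1
        have e4 : ((S.erase i).filter (i < ·)) = (S.filter (i < ·)) := by
          ext x; simp; intro h1 h2 h3; subst h3; simp at h1
        rw [e3] at e1; rw [e4] at e2
        simp only [hS, if_true] at cs
        rw [e1, e2, cs]
        symm
        convert zero_smul ℂ _
        rw [add_comm]
        apply add_eq_zero_iff_eq_neg.2
        apply msign_neg
        omega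
      · have hd' : ¬ Disjoint (S.erase i) T := fun h => hd (hiff.1 h)
        simp [hd, hd']
    · have hiff : Disjoint (S.erase i) T ↔ Disjoint S T := by
        simp only [Finset.disjoint_left, Finset.mem_erase]
        constructor
        · intro H a h1 h2
          by_cases ha : a = i
          · exact hT (ha ▸ h2)
          · exact H ⟨ha, h1⟩ h2
        · intro H a h1; exact H h1.2
      simp only [hS, hT, if_true, if_false, map_zero, mu, map_smul, LinearMap.smul_apply, add_zero]
      change _ = msign _ • mu _ _
      rw [mu_mono]
      by_cases hd : Disjoint S T
      · have hd' := hiff.2 hd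
        simp only [hd, hd', if_true, map_smul]
        rw [pd_mono, if_pos (Finset.mem_union_left _ hS)]
        have hu : (S ∪ T).erase i = S.erase i ∪ T := by
          rw [Finset.erase_union_distrib, Finset.erase_eq_of_notMem hT]
        rw [hu, smul_smul, smul_smul, ← msign_add, ← msign_add, filter_union_card hd,
          inv_erase_left hS]
        congr 1
        apply msign_congr; omega
      · have hd' : ¬ Disjoint (S.erase i) T := fun h => hd (hiff.1 h)
        simp [hd, hd']
  · by_cases hT : i ∈ T
    · have hiff : Disjoint S (T.erase i) ↔ Disjoint S T := by
        simp only [Finset.disjoint_left, Finset.mem_erase]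
        constructor
        · intro H a h1 h2
          by_cases ha : a = i
          · exact hS (ha ▸ h1)
          · exact H h1 ⟨ha, h2⟩
        · intro H a h1 h2; exact H h1 h2.2
      simp only [hS, hT, if_true, if_false, map_zero, mu, map_smul, LinearMap.smul_apply, zero_add,
        LinearMap.zero_apply]
      change _ = msign _ • msign _ • mu _ _
      rw [mu_mono]
      by_cases hd : Disjoint S T
      · have hd' := hiff.2 hd
        simp only [hd, hd', if_true, map_smul]
        rw [pd_mono, if_pos (Finset.mem_union_right _ hT)]
        have hu : (S ∪ T).erase i = S ∪ T.erase i := by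
          rw [Finset.erase_union_distrib, Finset.erase_eq_of_notMem hS]
        rw [hu, smul_smul, smul_smul, smul_smul, ← msign_add, ← msign_add, ← msign_add,
          filter_union_card hd, inv_erase_right hT]
        congr 1
        simp only [hS, if_false] at cs
        apply msign_congr; omega
      · have hd' : ¬ Disjoint S (T.erase i) := fun h => hd (hiff.1 h)
        simp [hd, hd']
    · simp only [hS, hT, if_false, map_zero, mu, LinearMap.zero_apply, add_zero]
      split_ifs with hd
      · rw [map_smul, pd_mono, if_neg (by simp [hS, hT]), smul_zero]
      · simp

lemma leibniz (i : Fin n) (f g : Lambda n) :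
    pd n i (mu f g) = mu (pd n i f) g + mu (par n f) (pd n i g) := by
  have key : (mulOp n).compr₂ (pd n i) =
      (mulOp n).comp (pd n i) + ((mulOp n).comp (par n)).compl₂ (pd n i) := by
    apply ext_mono; intro S
    apply ext_mono; intro T
    exact leibniz_mono i S T
  exact congrArg (fun A => A f g) key

lemma mu_empty (f g : Lambda n) : mu f g ∅ = f ∅ * g ∅ := by
  rw [mu_apply]; simp [inversions, msign]

lemma mu_one (f : Lambda n) : mu f (mono n ∅) = f := by
  have : (mulOp n).flip (mono n ∅) = LinearMap.id := by
    apply ext_mono; intro S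
    show mu (mono n S) (mono n ∅) = mono n S
    rw [mu_mono]; simp [inversions, msign]
  exact congrArg (fun A => A f) this

lemma one_mu : mulOp n (mono n ∅) = 1 := by
  apply ext_mono; intro S
  show mu (mono n ∅) (mono n S) = mono n S
  rw [mu_mono]; simp [inversions, msign]

/-- zero test -/
lemma zero_test {h : Lambda n} (h0 : h ∅ = 0) (hp : ∀ i, pd n i h = 0) : h = 0 := by
  funext T
  by_cases hT : T = ∅
  · rw [hT]; exact h0
  · obtain ⟨i, hi⟩ := Finset.nonempty_iff_ne_empty.2 hT
    have h1 := congrFun (hp i) (T.erase i)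
    change (if i ∈ T.erase i then 0 else msign ((T.erase i).filter (· < i)).card * h (insert i (T.erase i))) = 0 at h1
    rw [if_neg (by simp), Finset.insert_erase hi] at h1
    exact (mul_eq_zero.1 h1).resolve_left (msign_ne _)

lemma par_mu (f g : Lambda n) : par n (mu f g) = mu (par n f) (par n g) := by
  have key : (mulOp n).compr₂ (par n) = ((mulOp n).comp (par n)).compl₂ (par n) := by
    apply ext_mono; intro S
    apply ext_mono; intro T
    show par n (mu (mono n S) (mono n T)) = mu (par n (mono n S)) (par n (mono n T))
    rw [par_mono, par_mono]
    simp only [mu, map_smul, LinearMap.smul_apply]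
    change par n (mu _ _) = msign _ • msign _ • mu _ _
    rw [mu_mono]
    split_ifs with h
    · rw [map_smul, par_mono, Finset.card_union_of_disjoint h, smul_smul, smul_smul, smul_smul,
        msign_add]
      congr 1; ring
    · simp
  exact congrArg (fun A => A f g) key

lemma cidx_cidx (i : Fin n) : cidx n (cidx n i) = i := by
  apply Fin.ext
  have := i.isLt
  simp only [cidx]
  split_ifs <;> omega

lemma DH_apply (f g : Lambda n) :
    DHmap n f g = ∑ i, mu (pd n i (par n f)) (pd n (cidx n i) g) := by
  show (∑ i, mulOp n (pd n i (par n f)) * pd n (cidx n i)) g = _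
  simp [LinearMap.sum_apply]

/-- commutation of `∂_j` with Hamiltonian fields -/
lemma pd_DH (j : Fin n) (f g : Lambda n) :
    pd n j (DHmap n f g) = DHmap n (pd n j f) g + DHmap n (par n f) (pd n j g) := by
  rw [DH_apply, DH_apply, DH_apply, map_sum, ← Finset.sum_add_distrib]
  apply Finset.sum_congr rfl
  intro i _
  rw [leibniz]
  congr 1
  · rw [pd_pd, ← map_neg, pd_par j, neg_neg]
  · rw [pd_pd j, pd_par i (par n f)]
    simp [mu]

lemma pd_mono_single (i c : Fin n) :
    pd n i (mono n {c}) = if i = c then mono n ∅ else 0 := by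
  rw [pd_mono]
  by_cases h : i = c
  · subst h; simp [Finset.filter_singleton, msign]
  · simp [h]

lemma DH_X (f : Lambda n) (k : Fin n) :
    DHmap n f (mono n {k}) = pd n (cidx n k) (par n f) := by
  rw [DH_apply, Finset.sum_eq_single (cidx n k)]
  · rw [cidx_cidx, pd_mono_single, if_pos rfl, mu_one]
  · intro b _ hb
    rw [pd_mono_single, if_neg]
    · simp [mu]
    · intro h; apply hb; rw [← h, cidx_cidx]
  · simp

lemma DH_single (c : Fin n) : DHmap n (mono n {c}) = - pd n (cidx n c) := by
  apply LinearMap.ext; intro g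
  rw [DH_apply, Finset.sum_eq_single c]
  · rw [par_mono, map_smul, pd_mono_single, if_pos rfl]
    simp [mu, one_mu, msign]
  · intro b _ hb
    rw [par_mono, map_smul, pd_mono_single, if_neg hb]
    simp [mu]
  · simp

lemma DH_one : DHmap n (mono n ∅) = 0 := by
  apply LinearMap.ext; intro g
  rw [DH_apply]
  apply Finset.sum_eq_zero
  intro i _
  rw [par_mono, map_smul, pd_mono]; simp [mu]

lemma pd_one (i : Fin n) : pd n i (mono n ∅) = 0 := by rw [pd_mono]; simp

lemma DH_on_one (f : Lambda n) : DHmap n f (mono n ∅) = 0 := by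
  rw [DH_apply]
  apply Finset.sum_eq_zero
  intro i _
  rw [pd_one]; simp [mu]

/-- A Hamiltonian field vanishing on the generators is zero. -/
lemma Hn_ext {F : E n} (hF : F ∈ Hn n) (h : ∀ q, F (mono n {q}) = 0) : F = 0 := by
  obtain ⟨f, _, rfl⟩ := hF
  apply LinearMap.ext; intro g
  rw [DH_apply]
  apply Finset.sum_eq_zero
  intro i _
  have := h (cidx n i)
  rw [DH_X, cidx_cidx] at this
  rw [this]; simp [mu]

lemma Hn_one {F : E n} (hF : F ∈ Hn n) : F (mono n ∅) = 0 := by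
  obtain ⟨f, _, rfl⟩ := hF
  exact DH_on_one f

/-- no top coefficient -/
lemma DH_top (f g : Lambda n) : DHmap n f g Finset.univ = 0 := by
  have hpd : ∀ (i : Fin n) (u : Lambda n), pd n i u Finset.univ = 0 := by
    intro i u
    show (if i ∈ (Finset.univ : Finset (Fin n)) then (0:ℂ) else _) = 0
    simp
  have h1 : DHmap n f g = (∑ i, pd n i (mu (par n f) (pd n (cidx n i) g)))
      - mu f (∑ i, pd n i (pd n (cidx n i) g)) := by
    rw [DH_apply, mu, map_sum, ← Finset.sum_sub_distrib]
    apply Finset.sum_congr rfl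
    intro i _
    rw [leibniz, par_par]; simp [mu]
  have h2 : (∑ i, pd n i (pd n (cidx n i) g)) = 0 := by
    have h3 : (∑ i, pd n i (pd n (cidx n i) g)) = ∑ i, pd n (cidx n i) (pd n i g) := by
      refine Finset.sum_bij' (fun i _ => cidx n i) (fun i _ => cidx n i) ?_ ?_ ?_ ?_ ?_ <;>
        simp [cidx_cidx]
    have h4 : (∑ i, pd n i (pd n (cidx n i) g)) = - ∑ i, pd n (cidx n i) (pd n i g) := by
      rw [← Finset.sum_neg_distrib]
      exact Finset.sum_congr rfl fun i _ => pd_pd _ _ _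
    rw [← h3] at h4
    exact self_eq_neg.1 h4
  rw [h1, h2, mu, map_zero, sub_zero, Finset.sum_apply]
  exact Finset.sum_eq_zero fun i _ => hpd _ _

end AuxP1

section AuxP2
variable {n : ℕ}

lemma mono_ldeg (S : Finset (Fin n)) : mono n S ∈ ldeg n (S.card : ℤ) := by
  intro T hT
  apply mono_ne; rintro rfl; exact hT rfl

lemma pd_ldeg (i : Fin n) {m : ℤ} {f : Lambda n} (hf : f ∈ ldeg n m) : pd n i f ∈ ldeg n (m - 1) := by
  intro T hT
  show (if i ∈ T then 0 else msign (T.filter (· < i)).card * f (insert i T)) = 0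
  split_ifs with h
  · rfl
  · rw [hf, mul_zero]
    rw [Finset.card_insert_of_notMem h]; push_cast; intro hh; apply hT; omega

lemma par_ldeg {m : ℤ} {f : Lambda n} (hf : f ∈ ldeg n m) : par n f ∈ ldeg n m := by
  intro T hT
  show msign T.card * f T = 0
  rw [hf T hT, mul_zero]

lemma mu_ldeg {a b : ℤ} {f g : Lambda n} (hf : f ∈ ldeg n a) (hg : g ∈ ldeg n b) :
    mu f g ∈ ldeg n (a + b) := by
  intro U hU
  rw [mu_apply]
  apply Finset.sum_eq_zero
  intro S hS
  by_cases h1 : (S.card : ℤ) = a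
  · rw [hg (U \ S), mul_zero]
    intro h2; apply hU
    have := Finset.card_sdiff_add_card_eq_card (Finset.mem_powerset.1 hS)
    omega
  · rw [hf S h1]; ring

lemma DH_edeg {a : ℤ} {f : Lambda n} (hf : f ∈ ldeg n a) : DHmap n f ∈ edeg n (a - 2) := by
  intro m g hg
  rw [DH_apply]
  apply Submodule.sum_mem
  intro i _
  have := mu_ldeg (pd_ldeg i (par_ldeg hf)) (pd_ldeg (cidx n i) hg)
  convert this using 2; ring

lemma edeg_epar {d : ℤ} {D : E n} (hD : D ∈ edeg n d) : D ∈ epar n (d : ZMod 2) := by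
  intro q f hf T hT
  rw [sum_mono f, map_sum, Finset.sum_apply]
  apply Finset.sum_eq_zero
  intro S _
  rw [map_smul, Pi.smul_apply]
  by_cases h : (S.card : ZMod 2) = q
  · rw [hD _ _ (mono_ldeg S), smul_zero]
    intro h2; apply hT
    have := congrArg (Int.cast : ℤ → ZMod 2) h2
    push_cast at this
    rw [this, h]
  · rw [hf S h, zero_smul]

lemma mono_lpar (S : Finset (Fin n)) : mono n S ∈ lpar n (S.card : ZMod 2) := by
  intro T hT
  apply mono_ne; rintro rfl; exact hT rfl

lemma sgn_natCast (k : ℕ) : sgn (k : ZMod 2) = msign k := by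
  unfold sgn msign
  rw [ZMod.val_natCast, ← neg_one_pow_eq_pow_mod_two]

lemma zcases (a : ZMod 2) : a = 0 ∨ a = 1 := by
  revert a; decide
lemma sgn_zero : sgn 0 = 1 := by simp [sgn]
lemma sgn_one : sgn 1 = -1 := by simp [sgn, ZMod.val_one]
lemma z11 : (1 + 1 : ZMod 2) = 0 := by decide
lemma sgn_add (a b : ZMod 2) : sgn (a + b) = sgn a * sgn b := by
  rcases zcases a with rfl | rfl <;> rcases zcases b with rfl | rfl <;>
    simp [sgn_zero, sgn_one, z11]
lemma sgn_sq (a : ZMod 2) : sgn a * sgn a = 1 := by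
  rcases zcases a with rfl | rfl <;> simp [sgn_zero, sgn_one]
lemma sgn_ne (a : ZMod 2) : sgn a ≠ 0 := by
  rcases zcases a with rfl | rfl <;> simp [sgn_zero, sgn_one]

lemma par_lpar {q : ZMod 2} {f : Lambda n} (hf : f ∈ lpar n q) : par n f = sgn q • f := by
  funext T
  show msign T.card * f T = sgn q * f T
  by_cases h : (T.card : ZMod 2) = q
  · rw [← h, sgn_natCast]
  · rw [hf T h]; simp

lemma epar_conj {α : ZMod 2} {D : E n} (hD : D ∈ epar n α) : par n * D * par n = sgn α • D := by
  apply ext_mono; intro S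
  show par n (D (par n (mono n S))) = sgn α • D (mono n S)
  rw [par_mono, map_smul, map_smul, par_lpar (hD _ _ (mono_lpar S)), sgn_add, sgn_natCast,
    smul_smul, ← mul_assoc, msign_sq, one_mul]

lemma sb_hom {α β : ZMod 2} {D F : E n} (hD : D ∈ epar n α) (hF : F ∈ epar n β) :
    sbL n D F = D * F - sgn (α * β) • (F * D) := by
  show D * F - (2:ℂ)⁻¹ • ((F + par n * F * par n) * D + (F - par n * F * par n) * (par n * D * par n)) = _
  rw [epar_conj hD, epar_conj hF]
  rcases zcases α with rfl | rfl <;> rcases zcases β with rfl | rfl <;>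
    simp only [sgn_zero, sgn_one, mul_zero, zero_mul, mul_one, add_mul, sub_mul, smul_mul_assoc,
      mul_smul_comm, one_smul] <;> module

lemma epar_mul {α β : ZMod 2} {D F : E n} (hD : D ∈ epar n α) (hF : F ∈ epar n β) :
    D * F ∈ epar n (α + β) := by
  intro q f hf
  have := hD _ _ (hF q f hf)
  rw [show q + (α + β) = q + β + α by ring]
  exact this

lemma sb_epar {α β : ZMod 2} {D F : E n} (hD : D ∈ epar n α) (hF : F ∈ epar n β) :
    sbL n D F ∈ epar n (α + β) := by
  rw [sb_hom hD hF]
  apply Submodule.sub_mem _ (epar_mul hD hF)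
  apply Submodule.smul_mem
  rw [add_comm]; exact epar_mul hF hD

/-- basis elements of `H(n)` -/
def Dm (S : Finset (Fin n)) : E n := DHmap n (mono n S)

lemma Dm_edeg (S : Finset (Fin n)) : Dm S ∈ edeg n ((S.card : ℤ) - 2) := DH_edeg (mono_ldeg S)

lemma Dm_epar (S : Finset (Fin n)) : Dm S ∈ epar n (S.card : ZMod 2) := by
  have := edeg_epar (Dm_edeg S)
  convert this using 1
  push_cast
  rw [show (2 : ZMod 2) = 0 by decide, sub_zero]

lemma Dm_Hn {S : Finset (Fin n)} (hS : S ≠ Finset.univ) : Dm S ∈ Hn n :=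
  ⟨mono n S, mono_ne hS.symm, rfl⟩

lemma DH_emp (f u : Lambda n) (hf : ∀ i, f {i} = 0) : DHmap n f u ∅ = 0 := by
  rw [DH_apply, Finset.sum_apply]
  apply Finset.sum_eq_zero
  intro i _
  rw [mu_empty, pd_par]
  have : (-(par n) ((pd n i) f)) ∅ = 0 := by
    show -(msign _ * (if i ∈ (∅ : Finset (Fin n)) then 0 else msign _ * f (insert i ∅))) = 0
    have := hf i
    simp only [insert_empty_eq, this]; simp
  rw [this, zero_mul]

lemma closure_aux (N : ℕ) : ∀ S T : Finset (Fin n), S.card + T.card = N →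
    ∀ h : Lambda n, Dm S (Dm T h) - msign (S.card * T.card) • Dm T (Dm S h)
      = DHmap n (Dm S (mono n T)) h := by
  induction N using Nat.strong_induction_on with
  | _ N IH =>
  intro S T hN
  by_cases hS : S.card = 1
  · obtain ⟨c, rfl⟩ := Finset.card_eq_one.1 hS
    intro h
    simp only [Dm, DH_single, LinearMap.neg_apply, map_neg]
    rw [pd_DH, par_mono]
    simp
  by_cases hT : T.card = 1
  · obtain ⟨c, rfl⟩ := Finset.card_eq_one.1 hT
    intro h
    simp only [Dm, DH_single, LinearMap.neg_apply, map_neg]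
    rw [pd_DH, DH_X, par_mono]
    simp only [map_smul, LinearMap.smul_apply, Finset.card_singleton, mul_one]
    have := msign_sq S.card
    linear_combination (norm := module) this • (DHmap n (mono n S)) (pd n (cidx n c) h)
  -- general case
  have hemp : ∀ R : Finset (Fin n), R.card ≠ 1 → ∀ u, Dm R u ∅ = 0 := by
    intro R hR u
    apply DH_emp
    intro i; apply mono_ne; rintro rfl; simp at hR
  have hemp2 : ∀ u, DHmap n (Dm S (mono n T)) u ∅ = 0 := by
    intro u
    by_cases hS0 : S = ∅
    · subst hS0; simp [Dm, DH_one]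
    by_cases hT0 : T = ∅
    · subst hT0; simp [Dm, DH_on_one]
    apply DH_emp
    intro i
    apply Dm_edeg S _ _ (mono_ldeg T)
    have h1 := Finset.card_pos.2 (Finset.nonempty_iff_ne_empty.2 hS0)
    have h2 := Finset.card_pos.2 (Finset.nonempty_iff_ne_empty.2 hT0)
    simp; omega
  have hpd : ∀ j h, pd n j (Dm S (Dm T h) - msign (S.card * T.card) • Dm T (Dm S h)
      - DHmap n (Dm S (mono n T)) h) = msign (S.card + T.card) •
      (Dm S (Dm T (pd n j h)) - msign (S.card * T.card) • Dm T (Dm S (pd n j h))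
      - DHmap n (Dm S (mono n T)) (pd n j h)) := by
    intro j h
    have I1 : DHmap n (pd n j (mono n S)) (Dm T h)
        - (msign (S.card * T.card) * msign T.card) • Dm T (DHmap n (pd n j (mono n S)) h)
        = DHmap n (DHmap n (pd n j (mono n S)) (mono n T)) h := by
      rw [pd_mono]
      split_ifs with hj
      · have h1 := Finset.card_erase_add_one hj
        have := IH ((S.erase j).card + T.card) (by omega) (S.erase j) T rfl h
        simp only [map_smul, LinearMap.smul_apply]
        change _ • Dm (S.erase j) _ - _ • _ • Dm T (Dm (S.erase j) _) = _ • DHmap n (Dm (S.erase j) _) _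
        rw [← this, ← h1, ← msign_add]
        rw [msign_congr (a := ((S.erase j).card + 1) * T.card + T.card) (b := (S.erase j).card * T.card)]
        · module
        · rw [show ((S.erase j).card + 1) * T.card + T.card = (S.erase j).card * T.card + 2 * T.card by ring]
          omega
      · simp
    have I2 : Dm S (DHmap n (pd n j (mono n T)) h)
        - (msign (S.card * T.card) * msign S.card) • DHmap n (pd n j (mono n T)) (Dm S h)
        = DHmap n (Dm S (pd n j (mono n T))) h := by
      rw [pd_mono]
      split_ifs with hj
      · have h1 := Finset.card_erase_add_one hj
        have := IH (S.card + (T.erase j).card) (by omega) S (T.erase j) rfl h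
        simp only [map_smul, LinearMap.smul_apply]
        change _ • Dm S (Dm (T.erase j) _) - _ • _ • Dm (T.erase j) _ = _ • DHmap n (Dm S _) _
        rw [← this, ← h1, ← msign_add]
        rw [msign_congr (a := S.card * ((T.erase j).card + 1) + S.card) (b := S.card * (T.erase j).card)]
        · module
        · rw [show S.card * ((T.erase j).card + 1) + S.card = S.card * (T.erase j).card + 2 * S.card by ring]
          omega
      · simp
    have e1 : ∀ (R : Finset (Fin n)) u, pd n j (Dm R u) =
        DHmap n (pd n j (mono n R)) u + msign R.card • Dm R (pd n j u) := by
      intro R u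
      unfold Dm
      rw [pd_DH, par_mono]; simp
    have e2 : par n (Dm S (mono n T)) = msign (S.card + T.card) • Dm S (mono n T) := by
      have := par_lpar (Dm_epar S _ _ (mono_lpar T))
      rw [this, ← Nat.cast_add, sgn_natCast, add_comm]
    have hs := msign_sq S.card
    have ht := msign_sq T.card
    rw [map_sub, map_sub, map_smul, e1, e1, e1, e1, pd_DH, e2, e1, msign_add]
    simp only [map_add, map_smul, LinearMap.smul_apply, LinearMap.add_apply]
    linear_combination (norm := module) I1 + msign S.card • I2
      + (msign (S.card * T.card) • hs) • ((DHmap n) ((pd n j) (mono n T))) ((Dm S) h)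
  have main : ∀ k, ∀ R : Finset (Fin n), R.card = k → Dm S (Dm T (mono n R)) - msign (S.card * T.card) • Dm T (Dm S (mono n R))
      - DHmap n (Dm S (mono n T)) (mono n R) = 0 := by
    intro k
    induction k with
    | zero =>
      intro R hR
      rw [Finset.card_eq_zero.1 hR]
      simp [Dm, DH_on_one]
    | succ k ih =>
      intro R hR
      apply zero_test
      · simp only [Pi.sub_apply, Pi.smul_apply]
        rw [hemp S hS, hemp T hT, hemp2]; simp
      · intro j
        rw [hpd, pd_mono]
        split_ifs with hj
        · have := ih (R.erase j) (by rw [Finset.card_erase_of_mem hj, hR]; rfl)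
          simp only [map_smul]
          rw [smul_comm (msign (S.card * T.card)), ← smul_sub, ← smul_sub, this]
          simp
        · simp
  intro h
  have key : (Dm S * Dm T - msign (S.card * T.card) • (Dm T * Dm S)) =
      DHmap n (Dm S (mono n T)) := by
    apply ext_mono
    intro R
    exact sub_eq_zero.1 (main _ R rfl)
  exact congrArg (fun A : E n => A h) key

lemma sb_Dm (S T : Finset (Fin n)) : sbL n (Dm S) (Dm T) = DHmap n (Dm S (mono n T)) := by
  rw [sb_hom (Dm_epar S) (Dm_epar T), ← Nat.cast_mul, sgn_natCast]
  apply LinearMap.ext; intro h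
  exact closure_aux _ S T rfl h

lemma sb_Dm_Hn (S T : Finset (Fin n)) : sbL n (Dm S) (Dm T) ∈ Hn n := by
  rw [sb_Dm]
  exact ⟨_, DH_top _ _, rfl⟩

lemma sb_Dm_epar (S T : Finset (Fin n)) :
    sbL n (Dm S) (Dm T) ∈ epar n ((S.card : ZMod 2) + T.card) :=
  sb_epar (Dm_epar S) (Dm_epar T)

lemma sb_skew {α β : ZMod 2} {D F : E n} (hD : D ∈ epar n α) (hF : F ∈ epar n β) :
    sbL n D F = - sgn (α * β) • sbL n F D := by
  rw [sb_hom hD hF, sb_hom hF hD, mul_comm β α]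
  have := sgn_sq (α * β)
  linear_combination (norm := module) (-this) • (D * F)

/-- the constant vector fields `± ∂_k` -/
def Wd (k : Fin n) : Finset (Fin n) := {cidx n k}

lemma Wd_cidx (k : Fin n) : Wd (cidx n k) = {k} := by simp [Wd, cidx_cidx]

lemma Dm_Wd (k : Fin n) : Dm (Wd k) = - pd n k := by
  rw [Dm, Wd, DH_single, cidx_cidx]

lemma Wd_card (k : Fin n) : (Wd k).card = 1 := by simp [Wd]

lemma sb_Wd (k : Fin n) (S : Finset (Fin n)) : sbL n (Dm (Wd k)) (Dm S) =
    if k ∈ S then (- msign (S.filter (· < k)).card) • Dm (S.erase k) else 0 := by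
  rw [sb_Dm, Dm_Wd, LinearMap.neg_apply, pd_mono]
  split_ifs with h
  · rw [map_neg, map_smul, Dm]; module
  · simp

lemma sb_Wd_notMem {k : Fin n} {S : Finset (Fin n)} (h : k ∉ S) : sbL n (Dm (Wd k)) (Dm S) = 0 := by
  rw [sb_Wd, if_neg h]

lemma sb_Wd_mem {k : Fin n} {S : Finset (Fin n)} (h : k ∈ S) :
    ∃ c : ℂ, c ≠ 0 ∧ sbL n (Dm (Wd k)) (Dm S) = c • Dm (S.erase k) := by
  rw [sb_Wd, if_pos h]; exact ⟨_, neg_ne_zero.2 (msign_ne _), rfl⟩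

lemma sb_Dm_skew (S T : Finset (Fin n)) : ∃ c : ℂ, c ≠ 0 ∧
    sbL n (Dm S) (Dm T) = c • sbL n (Dm T) (Dm S) :=
  ⟨_, neg_ne_zero.2 (sgn_ne _), sb_skew (Dm_epar S) (Dm_epar T)⟩

lemma sb_Wd_notMem' {k : Fin n} {S : Finset (Fin n)} (h : k ∉ S) : sbL n (Dm S) (Dm (Wd k)) = 0 := by
  obtain ⟨c, _, hc⟩ := sb_Dm_skew S (Wd k)
  rw [hc, sb_Wd_notMem h, smul_zero]

lemma sb_Wd_mem' {k : Fin n} {S : Finset (Fin n)} (h : k ∈ S) :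
    ∃ c : ℂ, c ≠ 0 ∧ sbL n (Dm S) (Dm (Wd k)) = c • Dm (S.erase k) := by
  obtain ⟨c, hc0, hc⟩ := sb_Dm_skew S (Wd k)
  obtain ⟨d, hd0, hd⟩ := sb_Wd_mem h
  exact ⟨c * d, mul_ne_zero hc0 hd0, by rw [hc, hd, smul_smul]⟩

end AuxP2

section AuxP3
variable {n : ℕ}

lemma sb_jac {a b c : ZMod 2} {x y z : E n} (hx : x ∈ epar n a) (hy : y ∈ epar n b)
    (hz : z ∈ epar n c) : sbL n x (sbL n y z) = sbL n (sbL n x y) z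
      + sgn (a * b) • sbL n y (sbL n x z) := by
  rw [sb_hom hx (sb_epar hy hz), sb_hom (sb_epar hx hy) hz, sb_hom hy (sb_epar hx hz),
    sb_hom hx hy, sb_hom hy hz, sb_hom hx hz]
  simp only [mul_sub, sub_mul, smul_mul_assoc, mul_smul_comm, mul_assoc, mul_add, add_mul, sgn_add]
  rcases zcases a with rfl | rfl <;> rcases zcases b with rfl | rfl <;>
    rcases zcases c with rfl | rfl <;>
    simp only [sgn_zero, sgn_one, mul_zero, zero_mul, mul_one] <;> module

lemma sb_jac' {a b c : ZMod 2} {x y z : E n} (hx : x ∈ epar n a) (hy : y ∈ epar n b)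
    (hz : z ∈ epar n c) : sbL n (sbL n x y) z = sgn (b * c) • sbL n (sbL n x z) y
      - sgn (b * c) • sbL n x (sbL n z y) := by
  rw [sb_jac hx hz hy, sb_skew hz (sb_epar hx hy)]
  rcases zcases a with rfl | rfl <;> rcases zcases b with rfl | rfl <;>
    rcases zcases c with rfl | rfl <;>
    simp only [sgn_zero, sgn_one, z11, mul_add, mul_one, mul_zero, zero_mul, add_zero, zero_add] <;>
    module

/-- the fundamental four-term identity -/
lemma bider_four {L : Submodule ℂ (E n)} {p : ZMod 2} {f : E n →ₗ[ℂ] E n →ₗ[ℂ] E n}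
    (hf : IsSuperBider n L p f) {α υ β ν : ZMod 2} {x u y v : E n}
    (hx : x ∈ L ⊓ epar n α) (hu : u ∈ L ⊓ epar n υ) (hy : y ∈ L ⊓ epar n β)
    (hv : v ∈ L ⊓ epar n ν) (hxu : sbL n x u ∈ L) (hyv : sbL n y v ∈ L) :
    ∃ a b c : ℂ, sbL n (f x y) (sbL n u v) = a • sbL n (f u v) (sbL n x y)
      + b • sbL n (f x v) (sbL n u y) + c • sbL n (f u y) (sbL n x v) := by
  have hA := (hf.maps _ _ u hu y hy).2
  have hB := (hf.maps _ _ u hu v hv).2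
  have hC := (hf.maps _ _ x hx y hy).2
  have hD := (hf.maps _ _ x hx v hv).2
  have E1 := hf.eq1 _ _ _ x hx u hu (sbL n y v) ⟨hyv, sb_epar hy.2 hv.2⟩
  have E2 := hf.eq2 _ _ _ (sbL n x u) ⟨hxu, sb_epar hx.2 hu.2⟩ y hy v hv
  rw [hf.eq2 _ _ _ u hu y hy v hv, hf.eq2 _ _ _ x hx y hy v hv] at E1
  rw [hf.eq1 _ _ _ x hx u hu y hy, hf.eq1 _ _ _ x hx u hu v hv] at E2
  rw [E1] at E2
  clear E1
  have J1 := sb_jac hx.2 hA hv.2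
  have J2 := sb_jac' hC hv.2 hu.2
  have J3 := sb_jac hx.2 hy.2 hB
  have J4 := sb_jac hy.2 hD hu.2
  have K1 := sb_skew (sb_epar hx.2 hy.2) hB
  have K2 := sb_skew hy.2 hu.2
  rw [K1] at J3
  rw [K2] at J4
  clear K1 K2
  simp only [map_add, map_smul, LinearMap.add_apply, LinearMap.smul_apply] at E2 J4
  rw [J1, J2, J3, J4] at E2
  clear J1 J2 J3 J4
  have h2 := sgn_sq (υ * β)
  have key : ∃ a b c : ℂ, sgn (υ * β) • sbL n (f x y) (sbL n u v) = a • sbL n (f u v) (sbL n x y)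
      + b • sbL n (f x v) (sbL n u y) + c • sbL n (f u y) (sbL n x v) := by
    refine ⟨- sgn (α * p) * sgn ((p + υ) * β) * sgn ((α + β) * (υ + ν + p)), 
      sgn ((p + α + υ) * β) * sgn (υ * ν) * (sgn (β * (α + ν + p)) * sgn (β * υ)), sgn (α * p) * sgn (α * (υ + β + p)), ?_⟩
    rcases zcases α with rfl | rfl <;> rcases zcases β with rfl | rfl <;>
    rcases zcases υ with rfl | rfl <;> rcases zcases ν with rfl | rfl <;>
    rcases zcases p with rfl | rfl <;>
    simp only [sgn_zero, sgn_one, mul_zero, zero_mul, mul_one, z11, add_zero, zero_add] at E2 ⊢ <;>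
    linear_combination (norm := module) (-1 : ℂ) • E2
  obtain ⟨a, b, c, h⟩ := key
  refine ⟨sgn (υ * β) * a, sgn (υ * β) * b, sgn (υ * β) * c, ?_⟩
  have := congrArg (fun z => sgn (υ * β) • z) h
  simp only [smul_smul, h2, one_smul, smul_add] at this
  exact this

end AuxP3

section AuxP4
variable {n : ℕ}

/-- symmetric consequences of the biderivation identities, on basis elements -/
structure PB (f : E n →ₗ[ℂ] E n →ₗ[ℂ] E n) (i : ℤ) : Prop where
  deg : ∀ S T : Finset (Fin n), S ≠ Finset.univ → T ≠ Finset.univ →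
    f (Dm S) (Dm T) ∈ Hn n ⊓ edeg n (i + ((S.card : ℤ) - 2) + ((T.card : ℤ) - 2))
  a2a : ∀ (S T : Finset (Fin n)) k, S ≠ Finset.univ → T ≠ Finset.univ →
    f (Dm S) (Dm (Wd k)) = 0 → f (Dm S) (sbL n (Dm T) (Dm (Wd k))) = 0 →
    sbL n (f (Dm S) (Dm T)) (Dm (Wd k)) = 0
  a1a : ∀ (S T : Finset (Fin n)) k, S ≠ Finset.univ → T ≠ Finset.univ →
    f (Dm (Wd k)) (Dm T) = 0 → f (sbL n (Dm S) (Dm (Wd k))) (Dm T) = 0 →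
    sbL n (f (Dm S) (Dm T)) (Dm (Wd k)) = 0
  a2b : ∀ (S T : Finset (Fin n)) k, S ≠ Finset.univ → T ≠ Finset.univ →
    f (Dm S) (Dm (Wd k)) = 0 → f (Dm S) (Dm T) = 0 →
    f (Dm S) (sbL n (Dm T) (Dm (Wd k))) = 0
  a1b : ∀ (S T : Finset (Fin n)) k, S ≠ Finset.univ → T ≠ Finset.univ →
    f (Dm (Wd k)) (Dm T) = 0 → f (Dm S) (Dm T) = 0 →
    f (sbL n (Dm S) (Dm (Wd k))) (Dm T) = 0
  four : ∀ S T U R : Finset (Fin n), S ≠ Finset.univ → T ≠ Finset.univ → U ≠ Finset.univ →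
    R ≠ Finset.univ → ∃ a b c : ℂ, sbL n (f (Dm S) (Dm T)) (sbL n (Dm U) (Dm R)) =
      a • sbL n (f (Dm U) (Dm R)) (sbL n (Dm S) (Dm T))
      + b • sbL n (f (Dm S) (Dm R)) (sbL n (Dm U) (Dm T))
      + c • sbL n (f (Dm U) (Dm T)) (sbL n (Dm S) (Dm R))

lemma card_ne_univ {S : Finset (Fin n)} (h : S.card < n) : S ≠ Finset.univ := by
  rintro rfl; simp at h

lemma Wd_ne (hn : 4 < n) (k : Fin n) : Wd k ≠ Finset.univ :=
  card_ne_univ (by rw [Wd_card]; omega)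

lemma Dm_mem {S : Finset (Fin n)} (h : S ≠ Finset.univ) : Dm S ∈ Hn n ⊓ epar n (S.card : ZMod 2) :=
  ⟨Dm_Hn h, Dm_epar S⟩

lemma PB.of (hn : 4 < n) {pf : ZMod 2} {f : E n →ₗ[ℂ] E n →ₗ[ℂ] E n}
    (hf : IsSuperBider n (CT.H.algebra n) pf f)
    {i : ℤ} (hd : CT.H.HasDeg n f i) : PB f i where
  deg S T hS hT := hd _ _ _ ⟨Dm_Hn hS, Dm_edeg S⟩ _ ⟨Dm_Hn hT, Dm_edeg T⟩
  a2a S T k hS hT h1 h2 := by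
    rw [hf.eq2 _ _ _ _ (Dm_mem hS) _ (Dm_mem hT) _ (Dm_mem (Wd_ne hn k)), h1] at h2
    simpa using h2
  a1a S T k hS hT h1 h2 := by
    rw [hf.eq1 _ _ _ _ (Dm_mem hS) _ (Dm_mem (Wd_ne hn k)) _ (Dm_mem hT), h1] at h2
    simpa [sgn_ne] using h2
  a2b S T k hS hT h1 h2 := by
    rw [hf.eq2 _ _ _ _ (Dm_mem hS) _ (Dm_mem hT) _ (Dm_mem (Wd_ne hn k)), h1, h2]
    simp
  a1b S T k hS hT h1 h2 := by
    rw [hf.eq1 _ _ _ _ (Dm_mem hS) _ (Dm_mem (Wd_ne hn k)) _ (Dm_mem hT), h1, h2]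
    simp
  four S T U R hS hT hU hR :=
    bider_four hf (Dm_mem hS) (Dm_mem hU) (Dm_mem hT) (Dm_mem hR) (sb_Dm_Hn _ _) (sb_Dm_Hn _ _)

lemma PB.flip {f : E n →ₗ[ℂ] E n →ₗ[ℂ] E n} {i : ℤ} (hf : PB f i) : PB f.flip i where
  deg S T hS hT := by
    have := hf.deg T S hT hS
    rw [LinearMap.flip_apply]
    convert this using 3; ring
  a2a S T k hS hT := by
    simpa only [LinearMap.flip_apply] using hf.a1a T S k hT hS
  a1a S T k hS hT := by
    simpa only [LinearMap.flip_apply] using hf.a2a T S k hT hS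
  a2b S T k hS hT := by
    simpa only [LinearMap.flip_apply] using hf.a1b T S k hT hS
  a1b S T k hS hT := by
    simpa only [LinearMap.flip_apply] using hf.a2b T S k hT hS
  four S T U R hS hT hU hR := by
    simp only [LinearMap.flip_apply]
    obtain ⟨a, b, c, h⟩ := hf.four T S R U hT hS hR hU
    obtain ⟨d1, _, h1⟩ := sb_Dm_skew U R
    obtain ⟨d2, _, h2⟩ := sb_Dm_skew T S
    obtain ⟨d3, _, h3⟩ := sb_Dm_skew R S
    obtain ⟨d4, _, h4⟩ := sb_Dm_skew T U
    rw [h2, h3, h4] at h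
    rw [h1]
    refine ⟨d1 * (a * d2), d1 * (c * d4), d1 * (b * d3), ?_⟩
    rw [map_smul, h]
    simp only [map_smul]
    module

/-- low degree vanishing -/
lemma low_zero {F : E n} {d : ℤ} (hF : F ∈ Hn n ⊓ edeg n d) (hd : d < -1) : F = 0 := by
  apply Hn_ext hF.1
  intro q
  funext T
  apply hF.2 _ _ (mono_ldeg {q})
  simp; omega

/-- transitivity -/
lemma trans_zero {F : E n} {d : ℤ} (hF : F ∈ Hn n ⊓ edeg n d) (hd : 0 ≤ d)
    (h : ∀ k, sbL n F (Dm (Wd k)) = 0) : F = 0 := by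
  have key : ∀ m, ∀ R : Finset (Fin n), R.card = m → F (mono n R) = 0 := by
    intro m
    induction m with
    | zero =>
      intro R hR
      rw [Finset.card_eq_zero.1 hR]
      exact Hn_one hF.1
    | succ m ih =>
      intro R hR
      apply zero_test
      · apply hF.2 _ _ (mono_ldeg R)
        simp; omega
      · intro k
        have h1 := h k
        rw [sb_hom (edeg_epar hF.2) (Dm_epar _), Dm_Wd, sub_eq_zero] at h1
        have h2 := congrArg (fun A : E n => A (mono n R)) h1
        simp only [LinearMap.neg_apply, LinearMap.smul_apply, Module.End.mul_apply, smul_neg,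
          map_neg] at h2
        rw [neg_inj] at h2
        have h3 : F (pd n k (mono n R)) = 0 := by
          rw [pd_mono]
          split_ifs with hk
          · rw [map_smul, ih _ (by rw [Finset.card_erase_of_mem hk, hR]; rfl), smul_zero]
          · simp
        rw [h3] at h2
        exact (smul_eq_zero.1 h2.symm).resolve_left (sgn_ne _)
  apply ext_mono
  intro S
  rw [key _ S rfl]; rfl

/-- degree `-1` elements send generators to constants -/
lemma deg_neg {F : E n} (hF : F ∈ Hn n ⊓ edeg n (-1)) (q : Fin n) :
    ∃ c : ℂ, F (mono n {q}) = c • mono n ∅ := by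
  refine ⟨F (mono n {q}) ∅, ?_⟩
  funext T
  by_cases hT : T = ∅
  · subst hT; simp [mono_self]
  · rw [hF.2 _ _ (mono_ldeg {q}), Pi.smul_apply, mono_ne hT, smul_zero]
    have := Finset.card_pos.2 (Finset.nonempty_iff_ne_empty.2 hT)
    simp; omega

lemma ev_zero {F Y : E n} (hF : F ∈ Hn n ⊓ edeg n (-1)) (hY : Y ∈ Hn n) {β : ZMod 2}
    (hY2 : Y ∈ epar n β)
    (h : sbL n F Y = 0) {q r : Fin n} {c : ℂ} (hc : c ≠ 0) (hYr : Y (mono n {r}) = c • mono n {q}) :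
    F (mono n {q}) = 0 := by
  rw [sb_hom (edeg_epar hF.2) hY2, sub_eq_zero] at h
  have h2 := congrArg (fun A : E n => A (mono n {r})) h
  simp only [LinearMap.smul_apply, Module.End.mul_apply] at h2
  obtain ⟨d, hd⟩ := deg_neg hF r
  rw [hYr, hd, map_smul, map_smul, Hn_one hY] at h2
  simpa [hc] using h2

lemma Dm_pair {q r : Fin n} (h : q ≠ r) : ∃ c : ℂ, c ≠ 0 ∧
    Dm {q, r} (mono n {cidx n r}) = c • mono n {q} := by
  rw [Dm, DH_X, cidx_cidx, par_mono, map_smul, pd_mono, if_pos (by simp), smul_smul,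
    show ({q, r} : Finset (Fin n)).erase r = {q} by ext x; simp; grind]
  exact ⟨_, mul_ne_zero (msign_ne _) (msign_ne _), rfl⟩

/-- V-lemma -/
lemma v_zero {F : E n} (hF : F ∈ Hn n ⊓ edeg n (-1)) (hn : 4 < n) {q r : Fin n} (hqr : q ≠ r)
    (h : sbL n F (Dm {q, r}) = 0) : F (mono n {q}) = 0 := by
  obtain ⟨c, hc, hcc⟩ := Dm_pair hqr
  exact ev_zero hF (Dm_Hn (card_ne_univ (by rw [Finset.card_pair hqr]; omega))) (Dm_epar _) h hc hcc

lemma b2_zero {F : E n} (hF : F ∈ Hn n ⊓ edeg n (-1)) {a b d : Fin n} (hab : a ≠ b)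
    (hda : d ≠ a) (hdb : d ≠ b) (hdc : d ≠ cidx n a)
    (h : sbL n F (sbL n (Dm {b, a}) (Dm {cidx n a, d})) = 0) : F (mono n {b}) = 0 := by
  obtain ⟨c, hc, hcc⟩ := Dm_pair hdc.symm
  obtain ⟨c', hc', hcc'⟩ := Dm_pair hab.symm
  refine ev_zero hF (sb_Dm_Hn _ _) (sb_Dm_epar _ _) h (mul_ne_zero hc hc') (r := cidx n d) ?_
  rw [sb_hom (Dm_epar _) (Dm_epar _), LinearMap.sub_apply, LinearMap.smul_apply,
    Module.End.mul_apply, Module.End.mul_apply, hcc, map_smul, hcc', smul_smul]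
  have : Dm {b, a} (mono n {cidx n d}) = 0 := by
    rw [Dm, DH_X, cidx_cidx, par_mono, map_smul, pd_mono, if_neg (by simp [hda, hdb]), smul_zero]
  rw [this]; simp

end AuxP4

section AuxP5
variable {n : ℕ}

lemma ex_avoid (hn : 4 < n) (X : Finset (Fin n)) (h : X.card ≤ 4) : ∃ k, k ∉ X := by
  by_contra! hc
  have : X = Finset.univ := Finset.eq_univ_iff_forall.2 hc
  rw [this] at h; simp at h; omega

lemma Dm_empty : Dm (∅ : Finset (Fin n)) = 0 := by
  simp [Dm, DH_one]

lemma sb_WW (a b : Fin n) : sbL n (Dm (Wd a)) (Dm (Wd b)) = 0 := by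
  by_cases h : a ∈ Wd b
  · obtain ⟨c, _, hc⟩ := sb_Wd_mem h
    have : (Wd b).erase a = ∅ := by
      have h2 := Finset.card_erase_of_mem h
      rw [Wd_card] at h2
      exact Finset.card_eq_zero.1 h2
    rw [hc, this, Dm_empty, smul_zero]
  · exact sb_Wd_notMem h

lemma sb_erase {F : E n} {k : Fin n} {S : Finset (Fin n)} (hk : k ∉ S)
    (h : sbL n F (sbL n (Dm (Wd k)) (Dm (insert k S))) = 0) : sbL n F (Dm S) = 0 := by
  obtain ⟨c, hc, he⟩ := sb_Wd_mem (Finset.mem_insert_self k S)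
  rw [he, Finset.erase_insert hk, map_smul] at h
  exact (smul_eq_zero.1 h).resolve_left hc

lemma sb_erase' {F : E n} {k : Fin n} {S : Finset (Fin n)} (hk : k ∉ S)
    (h : sbL n F (sbL n (Dm (insert k S)) (Dm (Wd k))) = 0) : sbL n F (Dm S) = 0 := by
  obtain ⟨c, hc, he⟩ := sb_Wd_mem' (Finset.mem_insert_self k S)
  rw [he, Finset.erase_insert hk, map_smul] at h
  exact (smul_eq_zero.1 h).resolve_left hc

lemma trans_zero' {F : E n} {d : ℤ} (hF : F ∈ Hn n ⊓ edeg n d) (hd : 0 ≤ d)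
    (h : ∀ q, sbL n F (Dm {q}) = 0) : F = 0 :=
  trans_zero hF hd (fun _ => h _)

lemma pos_core (hn : 4 < n) {f : E n →ₗ[ℂ] E n →ₗ[ℂ] E n} {i : ℤ} (hf : PB f i) (a b k : Fin n)
    {S : Finset (Fin n)} (hS : S ≠ Finset.univ) (h : f (Dm (Wd k)) (Dm (Wd b)) = 0 ∨ a ∉ S) :
    sbL n (f (Dm (Wd a)) (Dm (Wd b))) (sbL n (Dm (Wd k)) (Dm S)) = 0 := by
  obtain ⟨A, B, C, h4⟩ := hf.four (Wd a) (Wd b) (Wd k) S (Wd_ne hn _) (Wd_ne hn _) (Wd_ne hn _) hS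
  rw [h4, sb_WW, sb_WW]
  rcases h with h | h
  · simp [h]
  · simp [sb_Wd_notMem h]

lemma pos_fin (hn : 4 < n) {F : E n} {i : ℤ} (hi : 0 < i) (hF : F ∈ Hn n ⊓ edeg n (i - 2))
    (h : ∀ q, ∃ k r : Fin n, k ≠ q ∧ r ≠ k ∧ r ≠ q ∧
      sbL n F (sbL n (Dm (Wd k)) (Dm {k, q})) = 0 ∧
      sbL n F (sbL n (Dm (Wd k)) (Dm {k, q, r})) = 0) : F = 0 := by
  by_cases h1 : i = 1
  · subst h1
    apply Hn_ext hF.1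
    intro q
    obtain ⟨k, r, hkq, hrk, hrq, -, h2⟩ := h q
    exact v_zero hF hn hrq.symm (sb_erase (by simp [hkq, hrk.symm]) h2)
  · apply trans_zero' hF (by omega)
    intro q
    obtain ⟨k, r, hkq, hrk, hrq, h2, -⟩ := h q
    exact sb_erase (by simp [hkq]) h2

lemma card2_ne (hn : 4 < n) (a b : Fin n) : ({a, b} : Finset (Fin n)) ≠ Finset.univ :=
  card_ne_univ (by have := Finset.card_le_two (a := a) (b := b); omega)

lemma card3_ne (hn : 4 < n) (a b c : Fin n) : ({a, b, c} : Finset (Fin n)) ≠ Finset.univ :=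
  card_ne_univ (by have := Finset.card_le_three (a := a) (b := b) (c := c); omega)

lemma pos_WW (hn : 4 < n) {f : E n →ₗ[ℂ] E n →ₗ[ℂ] E n} {i : ℤ} (hi : 0 < i) (hf : PB f i)
    (a b : Fin n) : f (Dm (Wd a)) (Dm (Wd b)) = 0 := by
  have hdeg : ∀ a b : Fin n, f (Dm (Wd a)) (Dm (Wd b)) ∈ Hn n ⊓ edeg n (i - 2) := by
    intro a b
    have := hf.deg (Wd a) (Wd b) (Wd_ne hn _) (Wd_ne hn _)
    rw [Wd_card, Wd_card] at this
    convert this using 3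
    push_cast; ring
  have hne : ∀ a b : Fin n, a ≠ b → f (Dm (Wd a)) (Dm (Wd b)) = 0 := by
    intro a b hab
    apply pos_fin hn hi (hdeg a b)
    intro q
    obtain ⟨k, hk⟩ := ex_avoid hn {a, b, q} (Finset.card_le_three.trans (by norm_num))
    obtain ⟨r, hr⟩ := ex_avoid hn {a, b, q, k} Finset.card_le_four
    simp only [Finset.mem_insert, Finset.mem_singleton, not_or] at hk hr
    refine ⟨k, r, hk.2.2, hr.2.2.2, hr.2.2.1, ?_, ?_⟩
    · by_cases hq : a = q
      · exact pos_core hn hf.flip b a k (card2_ne hn _ _) (Or.inr (by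
          simp only [Finset.mem_insert, Finset.mem_singleton, not_or]
          exact ⟨fun h => hk.2.1 h.symm, fun h => hab (hq.trans h.symm)⟩))
      · exact pos_core hn hf a b k (card2_ne hn _ _) (Or.inr (by
          simp only [Finset.mem_insert, Finset.mem_singleton, not_or]
          exact ⟨fun h => hk.1 h.symm, hq⟩))
    · by_cases hq : a = q
      · exact pos_core hn hf.flip b a k (card3_ne hn _ _ _) (Or.inr (by
          simp only [Finset.mem_insert, Finset.mem_singleton, not_or]
          exact ⟨fun h => hk.2.1 h.symm, fun h => hab (hq.trans h.symm), fun h => hr.2.1 h.symm⟩))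
      · exact pos_core hn hf a b k (card3_ne hn _ _ _) (Or.inr (by
          simp only [Finset.mem_insert, Finset.mem_singleton, not_or]
          exact ⟨fun h => hk.1 h.symm, hq, fun h => hr.1 h.symm⟩))
  by_cases hab : a = b
  · subst hab
    apply pos_fin hn hi (hdeg a a)
    intro q
    obtain ⟨k, hk⟩ := ex_avoid hn {a, q} (Finset.card_le_two.trans (by norm_num))
    obtain ⟨r, hr⟩ := ex_avoid hn {a, q, k} (Finset.card_le_three.trans (by norm_num))
    simp only [Finset.mem_insert, Finset.mem_singleton, not_or] at hk hr
    exact ⟨k, r, hk.2, hr.2.2, hr.2.1,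
      pos_core hn hf a a k (card2_ne hn _ _) (Or.inl (hne _ _ hk.1)),
      pos_core hn hf a a k (card3_ne hn _ _ _) (Or.inl (hne _ _ hk.1))⟩
  · exact hne a b hab

lemma PB.low {f : E n →ₗ[ℂ] E n →ₗ[ℂ] E n} {i : ℤ} (hf : PB f i) {S T : Finset (Fin n)}
    (hS : S ≠ Finset.univ) (hT : T ≠ Finset.univ) (h : i + S.card + T.card < 3) :
    f (Dm S) (Dm T) = 0 :=
  low_zero (hf.deg S T hS hT) (by omega)

lemma neg_N1 (hn : 4 < n) {f : E n →ₗ[ℂ] E n →ₗ[ℂ] E n} {i : ℤ} (hi : i < 0) (hf : PB f i)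
    {a b : Fin n} (hab : a ≠ b) {T : Finset (Fin n)} (hT : T ≠ Finset.univ)
    (hc : (T.card : ℤ) ≠ 1 - i) : f (Dm {a, b}) (Dm T) = 0 := by
  have hdeg := hf.deg {a, b} T (card2_ne hn a b) hT
  rw [Finset.card_pair hab] at hdeg
  by_cases hlow : (T.card : ℤ) < 1 - i
  · exact hf.low (card2_ne hn a b) hT (by rw [Finset.card_pair hab]; omega)
  apply trans_zero' hdeg (by push_cast; omega)
  intro q
  obtain ⟨l, hl⟩ := ex_avoid hn {a, b, q} (Finset.card_le_three.trans (by norm_num))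
  simp only [Finset.mem_insert, Finset.mem_singleton, not_or] at hl
  apply sb_erase' (k := l) (by simp [hl.2.2])
  obtain ⟨A, B, C, h4⟩ := hf.four {a, b} T {l, q} (Wd l) (card2_ne hn a b) hT (card2_ne hn l q)
    (Wd_ne hn l)
  rw [show insert l ({q} : Finset (Fin n)) = {l, q} from rfl, h4,
    hf.low (card2_ne hn l q) (Wd_ne hn l) (by rw [Finset.card_pair hl.2.2, Wd_card]; omega),
    hf.low (card2_ne hn a b) (Wd_ne hn l) (by rw [Finset.card_pair hab, Wd_card]; omega),
    sb_Wd_notMem' (k := l) (S := {a, b}) (by simp [hl.1, hl.2.1])]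
  simp

lemma neg_N (hn : 4 < n) {f : E n →ₗ[ℂ] E n →ₗ[ℂ] E n} {i : ℤ} (hi : i < 0) (hf : PB f i)
    {a b : Fin n} (hab : a ≠ b) {T : Finset (Fin n)} (hT : T ≠ Finset.univ) :
    f (Dm {a, b}) (Dm T) = 0 := by
  by_cases hc : (T.card : ℤ) = 1 - i
  swap
  · exact neg_N1 hn hi hf hab hT hc
  by_cases hm : i ≤ -3
  · have hdeg := hf.deg {a, b} T (card2_ne hn a b) hT
    rw [Finset.card_pair hab, hc, show i + (((2 : ℕ) : ℤ) - 2) + (1 - i - 2) = -1 by push_cast; ring]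
      at hdeg
    apply Hn_ext hdeg.1
    intro q
    obtain ⟨k, hk⟩ := ex_avoid hn {q} (by simp)
    obtain ⟨r, hr⟩ := ex_avoid hn {q, k} (Finset.card_le_two.trans (by norm_num))
    simp only [Finset.mem_insert, Finset.mem_singleton, not_or] at hk hr
    apply v_zero hdeg hn (r := r) (fun h => hr.1 h.symm)
    apply sb_erase (k := k) (by simp [hk, Ne.symm hr.2])
    obtain ⟨A, B, C, h4⟩ := hf.four {a, b} T (Wd k) {k, q, r} (card2_ne hn a b) hT (Wd_ne hn k)
      (card3_ne hn _ _ _)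
    have h3 := Finset.card_le_three (a := k) (b := q) (c := r)
    rw [show insert k ({q, r} : Finset (Fin n)) = {k, q, r} from rfl, h4,
      hf.low (Wd_ne hn k) (card3_ne hn _ _ _) (by rw [Wd_card]; push_cast; omega),
      hf.low (card2_ne hn a b) (card3_ne hn _ _ _) (by rw [Finset.card_pair hab]; push_cast; omega),
      hf.low (Wd_ne hn k) hT (by rw [Wd_card]; push_cast; omega)]
    simp
  · obtain ⟨k, hk⟩ := ex_avoid hn T (by omega)
    have hcard := Finset.card_insert_of_notMem hk
    have hT' : insert k T ≠ Finset.univ := card_ne_univ (by omega)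
    have h1 := hf.a2b {a, b} (insert k T) k (card2_ne hn a b) hT'
      (hf.low (card2_ne hn a b) (Wd_ne hn k) (by rw [Finset.card_pair hab, Wd_card]; omega))
      (neg_N1 hn hi hf hab hT' (by rw [hcard]; push_cast; omega))
    obtain ⟨c, hc, he⟩ := sb_Wd_mem' (Finset.mem_insert_self k T)
    rw [he, Finset.erase_insert hk, map_smul] at h1
    exact (smul_eq_zero.1 h1).resolve_left hc

lemma neg_N4 (hn : 4 < n) {f : E n →ₗ[ℂ] E n →ₗ[ℂ] E n} {i : ℤ} (hi : i < 0) (hf : PB f i)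
    {S T : Finset (Fin n)} (hS : S ≠ Finset.univ) (hT : T ≠ Finset.univ)
    (hc : i + S.card + T.card = 3) : f (Dm S) (Dm T) = 0 := by
  have hdeg := hf.deg S T hS hT
  rw [show i + ((S.card : ℤ) - 2) + ((T.card : ℤ) - 2) = -1 by omega] at hdeg
  apply Hn_ext hdeg.1
  intro b
  obtain ⟨a, ha⟩ := ex_avoid hn {b} (by simp)
  obtain ⟨d, hd⟩ := ex_avoid hn {a, b, cidx n a} (Finset.card_le_three.trans (by norm_num))
  simp only [Finset.mem_insert, Finset.mem_singleton, not_or] at ha hd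
  apply b2_zero hdeg ha hd.1 hd.2.1 hd.2.2
  obtain ⟨A, B, C, h4⟩ := hf.four S T {b, a} {cidx n a, d} hS hT (card2_ne hn _ _) (card2_ne hn _ _)
  have e1 : f (Dm S) (Dm {cidx n a, d}) = 0 :=
    neg_N hn hi hf.flip (Ne.symm hd.2.2) hS
  rw [h4, neg_N hn hi hf (Ne.symm ha) (card2_ne hn _ _), neg_N hn hi hf (Ne.symm ha) hT, e1]
  simp

lemma final_ind (hn : 4 < n) {f : E n →ₗ[ℂ] E n →ₗ[ℂ] E n} {i : ℤ} (hf : PB f i)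
    (hWW : ∀ a b : Fin n, f (Dm (Wd a)) (Dm (Wd b)) = 0)
    (hneg : ∀ S T : Finset (Fin n), S ≠ Finset.univ → T ≠ Finset.univ → i + S.card + T.card = 3 →
      f (Dm S) (Dm T) = 0) :
    ∀ S T : Finset (Fin n), S ≠ Finset.univ → T ≠ Finset.univ → f (Dm S) (Dm T) = 0 := by
  have red : ∀ S T : Finset (Fin n), S ≠ Finset.univ → T ≠ Finset.univ →
      (∀ k, sbL n (f (Dm S) (Dm T)) (Dm (Wd k)) = 0) → f (Dm S) (Dm T) = 0 := by
    intro S T hS hT h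
    rcases lt_trichotomy (i + S.card + T.card) 3 with h3 | h3 | h3
    · exact hf.low hS hT h3
    · exact hneg S T hS hT h3
    · exact trans_zero (hf.deg S T hS hT) (by omega) h
  have er : ∀ (S : Finset (Fin n)) k, S ≠ Finset.univ → S.erase k ≠ Finset.univ := by
    intro S k _ h
    have : k ∈ S.erase k := by rw [h]; simp
    simp at this
  have step1 : ∀ m, ∀ S : Finset (Fin n), S.card = m → S ≠ Finset.univ →
      ∀ k, f (Dm S) (Dm (Wd k)) = 0 := by
    intro m
    induction m with
    | zero =>
      intro S hm hS k
      rw [Finset.card_eq_zero.1 hm, Dm_empty]; simp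
    | succ m ih =>
      intro S hm hS k
      apply red S _ hS (Wd_ne hn k)
      intro l
      apply hf.a1a S _ l hS (Wd_ne hn k) (hWW _ _)
      by_cases hl : l ∈ S
      · obtain ⟨c, hc, he⟩ := sb_Wd_mem' hl
        rw [he, map_smul, LinearMap.smul_apply, ih _ (by rw [Finset.card_erase_of_mem hl, hm]; rfl) (er S l hS),
          smul_zero]
      · rw [sb_Wd_notMem' hl]; simp
  have step2 : ∀ m, ∀ S T : Finset (Fin n), T.card = m → S ≠ Finset.univ → T ≠ Finset.univ →
      f (Dm S) (Dm T) = 0 := by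
    intro m
    induction m with
    | zero =>
      intro S T hm hS hT
      rw [Finset.card_eq_zero.1 hm, Dm_empty]; simp
    | succ m ih =>
      intro S T hm hS hT
      apply red S T hS hT
      intro l
      apply hf.a2a S T l hS hT (step1 _ S rfl hS l)
      by_cases hl : l ∈ T
      · obtain ⟨c, hc, he⟩ := sb_Wd_mem' hl
        rw [he, map_smul, ih _ _ (by rw [Finset.card_erase_of_mem hl, hm]; rfl) hS (er T l hT),
          smul_zero]
      · rw [sb_Wd_notMem' hl]; simp
  intro S T hS hT
  exact step2 _ S T rfl hS hT

lemma PB.all_zero (hn : 4 < n) {f : E n →ₗ[ℂ] E n →ₗ[ℂ] E n} {i : ℤ} (hi : i ≠ 0) (hf : PB f i) :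
    ∀ S T : Finset (Fin n), S ≠ Finset.univ → T ≠ Finset.univ → f (Dm S) (Dm T) = 0 := by
  rcases lt_or_gt_of_ne hi with hi | hi
  · apply final_ind hn hf
    · intro a b
      exact hf.low (Wd_ne hn a) (Wd_ne hn b) (by rw [Wd_card, Wd_card]; omega)
    · intro S T hS hT h
      exact neg_N4 hn hi hf hS hT h
  · apply final_ind hn hf (pos_WW hn hi hf)
    intro S T hS hT h
    by_cases hS0 : S = ∅
    · rw [hS0, Dm_empty]; simp
    by_cases hT0 : T = ∅
    · rw [hT0, Dm_empty]; simp
    have h1 := Finset.card_pos.2 (Finset.nonempty_iff_ne_empty.2 hS0)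
    have h2 := Finset.card_pos.2 (Finset.nonempty_iff_ne_empty.2 hT0)
    obtain ⟨q, rfl⟩ := Finset.card_eq_one.1 (show S.card = 1 by omega)
    obtain ⟨r, rfl⟩ := Finset.card_eq_one.1 (show T.card = 1 by omega)
    have := pos_WW hn hi hf (cidx n q) (cidx n r)
    rwa [Wd_cidx, Wd_cidx] at this

lemma Hn_span {x : E n} (hx : x ∈ Hn n) : x ∈ Submodule.span ℂ
    {D | ∃ S : Finset (Fin n), S ≠ Finset.univ ∧ D = Dm S} := by
  obtain ⟨g, hg, rfl⟩ := hx
  have hg' : g Finset.univ = 0 := hg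
  rw [sum_mono g, map_sum]
  apply Submodule.sum_mem
  intro S _
  rw [map_smul]
  by_cases hS : S = Finset.univ
  · rw [hS, hg', zero_smul]; exact Submodule.zero_mem _
  · exact Submodule.smul_mem _ _ (Submodule.subset_span ⟨S, hS, rfl⟩)

lemma bider_zero (hn : 4 < n)
    (pf : ZMod 2) (f : E n →ₗ[ℂ] E n →ₗ[ℂ] E n)
    (hf : IsSuperBider n (CT.H.algebra n) pf f)
    (i : ℤ) (hi : i ≠ 0) (hd : CT.H.HasDeg n f i) :
    ∀ x ∈ CT.H.algebra n, ∀ y ∈ CT.H.algebra n, f x y = 0 := by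
  have key := (PB.of hn hf hd).all_zero hn hi
  intro x hx y hy
  have h1 : ∀ S : Finset (Fin n), S ≠ Finset.univ → f (Dm S) y = 0 := by
    intro S hS
    have : Submodule.span ℂ {D | ∃ S : Finset (Fin n), S ≠ Finset.univ ∧ D = Dm S}
        ≤ LinearMap.ker (f (Dm S)) := by
      rw [Submodule.span_le]
      rintro _ ⟨T, hT, rfl⟩
      exact key S T hS hT
    exact this (Hn_span hy)
  have : Submodule.span ℂ {D | ∃ S : Finset (Fin n), S ≠ Finset.univ ∧ D = Dm S}
      ≤ LinearMap.ker (f.flip y) := by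
    rw [Submodule.span_le]
    rintro _ ⟨S, hS, rfl⟩
    exact h1 S hS
  exact this (Hn_span hx)

end AuxP5

/-- For `L = H(n)`, `n > 4`, a super-biderivation `f ∈ BDer(L)_i` of
nonzero ℤ-degree `i` is the zero map. -/
theorem superBider_H_nonzero_degree_vanishes (n : ℕ) (hn : 4 < n)
    (pf : ZMod 2) (f : E n →ₗ[ℂ] E n →ₗ[ℂ] E n)
    (hf : IsSuperBider n (CT.H.algebra n) pf f)
    (i : ℤ) (hi : i ≠ 0) (hd : CT.H.HasDeg n f i) :
    ∀ x ∈ CT.H.algebra n, ∀ y ∈ CT.H.algebra n, f x y = 0 := by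
  exact bider_zero hn pf f hf i hi hd

end CartanSuper
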